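/- Let M : ℕ → ι → α be such that every change of M is single-entry, let J be a finite set of process indices, and for each j let f j : ℕ → ℕ be monotone and P j : ℕ → Prop satisfy the counter invariants (inv1) and (inv2). Let a ≤ b and assume: (i) every change of M at a time t with a ≤ t < b is caused by some process, i.e., M (t+1) ≠ M t implies P j t for some j ∈ J; (ii) f j b ≤ f j a + 1 for every j ∈ J; and (iii) at most one j ∈ J fails to satisfy (f j a = f j b and f j a even). Then every collect with read times in [a,b] is a snapshot over [a,b]: for every c : ι → ℕ with a ≤ c k ≤ b for all k, there exists t with a ≤ t ≤ b such that M (c k) k = M t k for all k. -/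

import Mathlib

/-!
Within `[a, b]` a counter takes at most one odd value, so each process modifies the array at most
once there, and a process whose counter is even and equal at both ends does not modify it at all.
As at most one process fails that test, the array changes at most once in the window, and only in
one entry `k₀`. All other entries are constant, so the collect agrees with the state of the array at
the time `k₀` was read.
-/

section Snapshot

open Set

/-- The times at which the sequence `u` changes; `t` stands for the step from `t` to `t + 1`, so the
changes within the window `[a, b]` are those in `Ico a b`. -/
def changeTimes {β : Type*} (u : ℕ → β) : Set ℕ := {t | u (t + 1) ≠ u t}

/-- The result of a collect that reads entry `k` of the array `M` at time `c k`. Entries may have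
different types. It is a snapshot over `[a, b]` if it equals `M t` for some
`t ∈ Icc a b`. -/
def collect {ι : Type*} {α : ι → Type*} (M : ℕ → ∀ k, α k) (c : ι → ℕ) : ∀ k, α k :=
  fun k => M (c k) k

theorem eq_left_of_disjoint_changeTimes {β : Type*} {u : ℕ → β} {a b t : ℕ}
    (h : Disjoint (changeTimes u) (Ico a b)) (ht : t ∈ Icc a b) : u t = u a := by
  obtain ⟨hat, htb⟩ := ht
  induction t, hat using Nat.le_induction with
  | base => rfl
  | succ t hat ih =>
    have hstep : u (t + 1) = u t := not_not.mp (h.notMem_of_mem_right ⟨hat, htb⟩)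
    exact hstep.trans (ih (Nat.le_of_succ_le htb))

section Collect

variable {ι : Type*} {α : ι → Type*} {M : ℕ → ∀ k, α k} {c : ι → ℕ} {a b : ℕ}

theorem collect_eq_of_forall_ne_disjoint_changeTimes {k₀ : ι}
    (h : ∀ k ≠ k₀, Disjoint (changeTimes fun t => M t k) (Ico a b))
    (hc : ∀ k, c k ∈ Icc a b) : collect M c = M (c k₀) := by
  funext k
  obtain rfl | hk := eq_or_ne k k₀
  · rfl
  · exact (eq_left_of_disjoint_changeTimes (h k hk) (hc k)).trans
      (eq_left_of_disjoint_changeTimes (h k hk) (hc k₀)).symm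

theorem collect_mem_image_Icc_of_subsingleton_changeTimes (hab : a ≤ b)
    (hsingle : ∀ t ∈ changeTimes M ∩ Ico a b, ∃ k₀, ∀ k ≠ k₀, M (t + 1) k = M t k)
    (hsub : (changeTimes M ∩ Ico a b).Subsingleton) (hc : ∀ k, c k ∈ Icc a b) :
    collect M c ∈ M '' Icc a b := by
  obtain hempty | ⟨s, hs⟩ := (changeTimes M ∩ Ico a b).eq_empty_or_nonempty
  · have hconst : ∀ t ∈ Icc a b, M t = M a := fun _ =>
      eq_left_of_disjoint_changeTimes (disjoint_iff_inter_eq_empty.mpr hempty)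
    exact ⟨a, left_mem_Icc.mpr hab, funext fun k => (congrFun (hconst (c k) (hc k)) k).symm⟩
  · obtain ⟨k₀, hk₀⟩ := hsingle s hs
    refine ⟨c k₀, hc k₀, (collect_eq_of_forall_ne_disjoint_changeTimes (fun k hk => ?_) hc).symm⟩
    refine disjoint_left.mpr fun t hchange ht => hchange ?_
    have hM : t ∈ changeTimes M := fun heq => hchange (congrFun heq k)
    rw [hsub ⟨hM, ht⟩ hs]
    exact hk₀ k hk

end Collect

section Counter

variable {g : ℕ → ℕ} {a b : ℕ}

theorem not_eq_and_even_of_odd_of_mem_Icc {t : ℕ} (hg : MonotoneOn g (Icc a b))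
    (ht : t ∈ Icc a b) (hodd : Odd (g t)) : ¬(g a = g b ∧ Even (g a)) := by
  rintro ⟨heq, heven⟩
  have hconst : g t = g a :=
    have ⟨hle, hge⟩ := hg.mapsTo_Icc ht
    le_antisymm (hge.trans_eq heq.symm) hle
  exact Nat.not_even_iff_odd.mpr hodd (hconst ▸ heven)

theorem subsingleton_setOf_odd_Icc_add_one (n : ℕ) :
    {m ∈ Icc n (n + 1) | Odd m}.Subsingleton := by
  rintro _ ⟨⟨_, _⟩, ⟨p, _⟩⟩ _ ⟨⟨_, _⟩, ⟨q, _⟩⟩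
  omega

theorem subsingleton_of_injOn_of_forall_odd {W : Set ℕ} (hg : MonotoneOn g (Icc a b))
    (hbound : g b ≤ g a + 1) (hW : W ⊆ Icc a b) (hodd : ∀ t ∈ W, Odd (g t)) (hinj : InjOn g W) :
    W.Subsingleton := by
  have hmaps : MapsTo g W {m ∈ Icc (g a) (g a + 1) | Odd m} := fun t ht =>
    have hmem := hg.mapsTo_Icc (hW ht)
    ⟨⟨hmem.1, hmem.2.trans hbound⟩, hodd t ht⟩
  exact fun s hs t ht =>
    hinj hs ht (subsingleton_setOf_odd_Icc_add_one (g a) (hmaps hs) (hmaps ht))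

end Counter

theorem subsingleton_biUnion_of_subsingleton_nonempty {ι β : Type*} {J : Set ι} {W : ι → Set β}
    (hJ : {j ∈ J | (W j).Nonempty}.Subsingleton) (hW : ∀ j ∈ J, (W j).Subsingleton) :
    (⋃ j ∈ J, W j).Subsingleton := by
  intro s hs t ht
  obtain ⟨i, hi, hsi⟩ := mem_iUnion₂.mp hs
  obtain ⟨j, hj, htj⟩ := mem_iUnion₂.mp ht
  obtain rfl : i = j := hJ ⟨hi, s, hsi⟩ ⟨hj, t, htj⟩
  exact hW i hi hsi htj

theorem concurrent_updater_scan_correct_general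
    {ι ι' : Type*} {α : ι → Type*} (M : ℕ → ∀ k, α k)
    (hsingle : ∀ t, M (t + 1) ≠ M t → ∃ k₀ : ι, ∀ k, k ≠ k₀ → M (t + 1) k = M t k)
    (J : Set ι') (f : ι' → ℕ → ℕ) (P : ι' → ℕ → Prop)
    (hf : ∀ j ∈ J, Monotone (f j))
    (inv1 : ∀ j ∈ J, ∀ t, P j t → Odd (f j t))
    (inv2 : ∀ j ∈ J, ∀ s t, P j s → P j t → f j s = f j t → s = t)
    (a b : ℕ) (hab : a ≤ b)
    (hcause : ∀ t, a ≤ t → t < b → M (t + 1) ≠ M t → ∃ j ∈ J, P j t)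
    (hbound : ∀ j ∈ J, f j b ≤ f j a + 1)
    (hone : ∀ j₁ ∈ J, ∀ j₂ ∈ J,
      ¬ (f j₁ a = f j₁ b ∧ Even (f j₁ a)) →
      ¬ (f j₂ a = f j₂ b ∧ Even (f j₂ a)) → j₁ = j₂) :
    ∀ c : ι → ℕ, (∀ k, a ≤ c k ∧ c k ≤ b) →
      ∃ t, a ≤ t ∧ t ≤ b ∧ ∀ k, M (c k) k = M t k := by
  intro c hc
  let W (j : ι') : Set ℕ := {t ∈ Ico a b | P j t}
  have hW (j : ι') : W j ⊆ Icc a b := fun _ ht => Ico_subset_Icc_self ht.1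
  have hmodifier : {j ∈ J | (W j).Nonempty}.Subsingleton := by
    have hfail : ∀ j ∈ J, (W j).Nonempty → ¬(f j a = f j b ∧ Even (f j a)) := fun j hj ⟨t, ht⟩ =>
      not_eq_and_even_of_odd_of_mem_Icc ((hf j hj).monotoneOn _) (hW j ht) (inv1 j hj t ht.2)
    exact fun i ⟨hi, hWi⟩ j ⟨hj, hWj⟩ => hone i hi j hj (hfail i hi hWi) (hfail j hj hWj)
  have honce : ∀ j ∈ J, (W j).Subsingleton := fun j hj =>
    subsingleton_of_injOn_of_forall_odd ((hf j hj).monotoneOn _) (hbound j hj) (hW j)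
      (fun t ht => inv1 j hj t ht.2) (fun s hs t ht => inv2 j hj s t hs.2 ht.2)
  have hcover : changeTimes M ∩ Ico a b ⊆ ⋃ j ∈ J, W j := fun t ⟨hchange, ht⟩ =>
    have ⟨_, hj, hPj⟩ := hcause t ht.1 ht.2 hchange
    mem_biUnion hj ⟨ht, hPj⟩
  have hsub : (changeTimes M ∩ Ico a b).Subsingleton :=
    (subsingleton_biUnion_of_subsingleton_nonempty hmodifier honce).anti hcover
  obtain ⟨t, ⟨hat, htb⟩, hsnap⟩ := collect_mem_image_Icc_of_subsingleton_changeTimes hab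
    (fun t ht => hsingle t ht.1) hsub hc
  exact ⟨t, hat, htb, fun k => (congrFun hsnap k).symm⟩

end Snapshot

/-- Correctness of the test in lines B13–B15 of the concurrent-updater
algorithm: if every process's counter increases by at most one over `[a,b]`,
every change of `M` in `[a,b)` is caused by some process, and at most one
process fails the equal-and-even test, then every collect with read times in
`[a,b]` is a snapshot over `[a,b]`. -/
theorem concurrent_updater_scan_correct
    {ι α ι' : Type*} (M : ℕ → ι → α)
    (hsingle : ∀ t, M (t + 1) ≠ M t → ∃ k₀ : ι, ∀ k, k ≠ k₀ → M (t + 1) k = M t k)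
    (J : Finset ι') (f : ι' → ℕ → ℕ) (P : ι' → ℕ → Prop)
    (hf : ∀ j ∈ J, Monotone (f j))
    (inv1 : ∀ j ∈ J, ∀ t, P j t → Odd (f j t))
    (inv2 : ∀ j ∈ J, ∀ s t, P j s → P j t → f j s = f j t → s = t)
    (a b : ℕ) (hab : a ≤ b)
    (hcause : ∀ t, a ≤ t → t < b → M (t + 1) ≠ M t → ∃ j ∈ J, P j t)
    (hbound : ∀ j ∈ J, f j b ≤ f j a + 1)
    (hone : ∀ j₁ ∈ J, ∀ j₂ ∈ J,
      ¬ (f j₁ a = f j₁ b ∧ Even (f j₁ a)) →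
      ¬ (f j₂ a = f j₂ b ∧ Even (f j₂ a)) → j₁ = j₂) :
    ∀ c : ι → ℕ, (∀ k, a ≤ c k ∧ c k ≤ b) →
      ∃ t, a ≤ t ∧ t ≤ b ∧ ∀ k, M (c k) k = M t k :=
  concurrent_updater_scan_correct_general M hsingle J f P hf inv1 inv2 a b hab hcause hbound hone
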